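/- Tight characterization: let t be a checkers term. (1) Correctness: if Γ ⊢^k t : L is derivable with (Γ, L) tight, then there is a checkers head normal form h and an evaluation t →hch* h containing exactly k interaction steps. (2) Completeness: if t →hch* h with h a checkers head normal form and the evaluation contains exactly k interaction steps, then there is a derivation Γ ⊢^k t : L with (Γ, L) tight. -/

import Mathlib

set_option autoImplicit false

/-! ### Players -/

inductive Player : Type
  | white
  | black
deriving DecidableEq

/-- The opposite player. -/
def Player.op : Player → Player
  | .white => .black
  | .black => .white

/-- `gamma p q` is `0` if the players agree (silent) and `1` otherwise (interaction). -/
def Player.gamma (p q : Player) : ℕ := if p = q then 0 else 1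

/-! ### Ordinary λ-terms (de Bruijn representation) -/

inductive Lam : Type
  | var : ℕ → Lam
  | lam : Lam → Lam
  | app : Lam → Lam → Lam
deriving DecidableEq

namespace Lam

/-- Shift the free de Bruijn indices ≥ `d` by one. -/
def liftAt : Lam → ℕ → Lam
  | .var n, d => .var (if n < d then n else n + 1)
  | .lam t, d => .lam (t.liftAt (d + 1))
  | .app t u, d => .app (t.liftAt d) (u.liftAt d)

/-- Capture-avoiding substitution of `u` for the de Bruijn index `x`. -/
def subst : Lam → ℕ → Lam → Lam
  | .var n, x, u => if n = x then u else if x < n then .var (n - 1) else .var n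
  | .lam t, x, u => .lam (t.subst (x + 1) (u.liftAt 0))
  | .app t s, x, u => .app (t.subst x u) (s.subst x u)

end Lam

/-- Root β-rule: `(λx.t) u ↦ t[x:=u]`. -/
inductive LBetaRoot : Lam → Lam → Prop
  | beta (t u : Lam) : LBetaRoot (.app (.lam t) u) (t.subst 0 u)

/-- Root η-rule: `λx. t x ↦ t` with `x ∉ FV(t)` (enforced by the lifting). -/
inductive LEtaRoot : Lam → Lam → Prop
  | eta (t : Lam) : LEtaRoot (.lam (.app (t.liftAt 0) (.var 0))) t

/-- Closure of a root relation under all contexts. -/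
inductive LFull (R : Lam → Lam → Prop) : Lam → Lam → Prop
  | root {t u : Lam} : R t u → LFull R t u
  | lam {t u : Lam} : LFull R t u → LFull R (.lam t) (.lam u)
  | appL {t t' : Lam} (u : Lam) : LFull R t t' → LFull R (.app t u) (.app t' u)
  | appR (t : Lam) {u u' : Lam} : LFull R u u' → LFull R (.app t u) (.app t u')

/-- Closure under applicative spine contexts `⟨·⟩ t1 … tk`. -/
inductive LSpine (R : Lam → Lam → Prop) : Lam → Lam → Prop
  | root {t u : Lam} : R t u → LSpine R t u
  | appL {t t' : Lam} (u : Lam) : LSpine R t t' → LSpine R (.app t u) (.app t' u)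

/-- Closure under head contexts `λx1…xn.⟨·⟩ t1 … tk`. -/
inductive LHead (R : Lam → Lam → Prop) : Lam → Lam → Prop
  | spine {t u : Lam} : LSpine R t u → LHead R t u
  | lam {t u : Lam} : LHead R t u → LHead R (.lam t) (.lam u)

/-- β-reduction. -/
def LBeta : Lam → Lam → Prop := LFull LBetaRoot
/-- η-reduction. -/
def LEta : Lam → Lam → Prop := LFull LEtaRoot
/-- Head reduction. -/
def LHStep : Lam → Lam → Prop := LHead LBetaRoot
/-- Multistep head reduction. -/
def LHSteps : Lam → Lam → Prop := Relation.ReflTransGen LHStep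

/-- β-conversion (reflexive-symmetric-transitive closure of β-reduction). -/
def LBetaConv : Lam → Lam → Prop :=
  Relation.ReflTransGen (fun a b => LBeta a b ∨ LBeta b a)
/-- η-conversion. -/
def LEtaConv : Lam → Lam → Prop :=
  Relation.ReflTransGen (fun a b => LEta a b ∨ LEta b a)

/-- Head normal forms: no head step out of `t`. -/
def Lam.LHNF (t : Lam) : Prop := ∀ u, ¬ LHStep t u

/-- Head convergence: `t ⇓h`. -/
def Lam.HConv (t : Lam) : Prop := ∃ h, LHSteps t h ∧ h.LHNF

/-- Ordinary contexts (one hole). -/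
inductive LCtx : Type
  | hole : LCtx
  | lam : LCtx → LCtx
  | appL : LCtx → Lam → LCtx
  | appR : Lam → LCtx → LCtx

/-- Plugging (allowing variable capture). -/
def LCtx.fill : LCtx → Lam → Lam
  | .hole, t => t
  | .lam C, t => .lam (C.fill t)
  | .appL C u, t => .app (C.fill t) u
  | .appR s C, t => .app s (C.fill t)

/-- Head contextual preorder on λ-terms. -/
def CtxLe (t u : Lam) : Prop := ∀ C : LCtx, (C.fill t).HConv → (C.fill u).HConv

/-! ### Checkers terms -/

inductive CTerm : Type
  | var : ℕ → CTerm
  | lam : Player → CTerm → CTerm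
  | app : Player → CTerm → CTerm → CTerm
deriving DecidableEq

namespace CTerm

/-- Shift the free de Bruijn indices ≥ `d` by one. -/
def liftAt : CTerm → ℕ → CTerm
  | .var n, d => .var (if n < d then n else n + 1)
  | .lam p t, d => .lam p (t.liftAt (d + 1))
  | .app p t u, d => .app p (t.liftAt d) (u.liftAt d)

/-- Capture-avoiding substitution of `u` for the de Bruijn index `x`. -/
def subst : CTerm → ℕ → CTerm → CTerm
  | .var n, x, u => if n = x then u else if x < n then .var (n - 1) else .var n
  | .lam p t, x, u => .lam p (t.subst (x + 1) (u.liftAt 0))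
  | .app p t s, x, u => .app p (t.subst x u) (s.subst x u)

/-- The underlying ordinary λ-term of a checkers term. -/
def untag : CTerm → Lam
  | .var n => .var n
  | .lam _ t => .lam t.untag
  | .app _ t u => .app t.untag u.untag

end CTerm

/-- Player lifting: tag every abstraction and application with player `p`. -/
def Lam.tag : Lam → Player → CTerm
  | .var n, _ => .var n
  | .lam t, p => .lam p (t.tag p)
  | .app t u, p => .app p (t.tag p) (u.tag p)

/-- Silent β root rule: the abstraction and the application carry the same player. -/
inductive SilentRoot : CTerm → CTerm → Prop
  | beta (p : Player) (t u : CTerm) : SilentRoot (.app p (.lam p t) u) (t.subst 0 u)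

/-- Interaction β root rule: the application carries the opposite player of the abstraction. -/
inductive InterRoot : CTerm → CTerm → Prop
  | beta (p : Player) (t u : CTerm) : InterRoot (.app p.op (.lam p t) u) (t.subst 0 u)

/-- Closure of a root relation under all checkers contexts. -/
inductive CFull (R : CTerm → CTerm → Prop) : CTerm → CTerm → Prop
  | root {t u : CTerm} : R t u → CFull R t u
  | lam (p : Player) {t u : CTerm} : CFull R t u → CFull R (.lam p t) (.lam p u)
  | appL (p : Player) {t t' : CTerm} (u : CTerm) : CFull R t t' → CFull R (.app p t u) (.app p t' u)
  | appR (p : Player) (t : CTerm) {u u' : CTerm} : CFull R u u' → CFull R (.app p t u) (.app p t u')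

/-- Closure under applicative spine contexts `⟨·⟩ @_{q1} t1 … @_{qk} tk`. -/
inductive CSpine (R : CTerm → CTerm → Prop) : CTerm → CTerm → Prop
  | root {t u : CTerm} : R t u → CSpine R t u
  | appL (p : Player) {t t' : CTerm} (u : CTerm) : CSpine R t t' → CSpine R (.app p t u) (.app p t' u)

/-- Closure under checkers head contexts `λ_{p1}x1…λ_{pn}xn.⟨·⟩ @_{q1} t1 … @_{qk} tk`. -/
inductive CHead (R : CTerm → CTerm → Prop) : CTerm → CTerm → Prop
  | spine {t u : CTerm} : CSpine R t u → CHead R t u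
  | lam (p : Player) {t u : CTerm} : CHead R t u → CHead R (.lam p t) (.lam p u)

/-- Silent β-reduction `→τ`. -/
def StepTau : CTerm → CTerm → Prop := CFull SilentRoot
/-- Interaction β-reduction `→⊛`. -/
def StepInt : CTerm → CTerm → Prop := CFull InterRoot
/-- Checkers β-reduction `→βch`. -/
def StepBch (t u : CTerm) : Prop := StepTau t u ∨ StepInt t u

/-- Silent head reduction `→hτ`. -/
def HStepTau : CTerm → CTerm → Prop := CHead SilentRoot
/-- Interaction head reduction `→h⊛`. -/
def HStepInt : CTerm → CTerm → Prop := CHead InterRoot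
/-- Checkers head reduction `→hch`. -/
def HStepCh (t u : CTerm) : Prop := HStepTau t u ∨ HStepInt t u

/-- Checkers head normal form. -/
def CTerm.HNF (t : CTerm) : Prop := ∀ u, ¬ HStepCh t u

/-- `BigStep t k` means `t ⇓^k`: the (deterministic) checkers head evaluation of `t`
terminates and performs exactly `k` interaction steps. -/
inductive BigStep : CTerm → ℕ → Prop
  | nf {t : CTerm} : t.HNF → BigStep t 0
  | silent {t u : CTerm} {k : ℕ} : HStepTau t u → BigStep u k → BigStep t k
  | inter {t u : CTerm} {k : ℕ} : HStepInt t u → BigStep u k → BigStep t (k + 1)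

/-- `HRed t n i u`: a checkers head reduction sequence from `t` to `u` of length `n`
containing exactly `i` interaction steps. -/
inductive HRed : CTerm → ℕ → ℕ → CTerm → Prop
  | refl (t : CTerm) : HRed t 0 0 t
  | silent {t u s : CTerm} {n i : ℕ} : HStepTau t u → HRed u n i s → HRed t (n + 1) i s
  | inter {t u s : CTerm} {n i : ℕ} : HStepInt t u → HRed u n i s → HRed t (n + 1) (i + 1) s

/-- Checkers contexts (one hole). -/
inductive CCtx : Type
  | hole : CCtx
  | lam : Player → CCtx → CCtx
  | appL : Player → CCtx → CTerm → CCtx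
  | appR : Player → CTerm → CCtx → CCtx

/-- Plugging (allowing variable capture). -/
def CCtx.fill : CCtx → CTerm → CTerm
  | .hole, t => t
  | .lam p C, t => .lam p (C.fill t)
  | .appL p C u, t => .app p (C.fill t) u
  | .appR p s C, t => .app p s (C.fill t)

/-- Player lifting of ordinary contexts. -/
def LCtx.tag : LCtx → Player → CCtx
  | .hole, _ => .hole
  | .lam C, p => .lam p (C.tag p)
  | .appL C u, p => .appL p (C.tag p) (u.tag p)
  | .appR s C, p => .appR p (s.tag p) (C.tag p)

/-- Checkers interaction preorder `≼ctx⊛` on checkers terms. -/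
def IntCtxLe (t u : CTerm) : Prop :=
  ∀ (C : CCtx) (k : ℕ), BigStep (C.fill t) k → BigStep (C.fill u) k

/-- Checkers interaction improvement `≼imp⊛` on checkers terms. -/
def ImpCtxLe (t u : CTerm) : Prop :=
  ∀ (C : CCtx) (k : ℕ), BigStep (C.fill t) k → ∃ k', k' ≤ k ∧ BigStep (C.fill u) k'

/-- Interaction preorder `⊑int` on ordinary λ-terms, via black lifting. -/
def IntLe (t u : Lam) : Prop := IntCtxLe (t.tag .black) (u.tag .black)

/-- Interaction improvement `⊑int·imp` on ordinary λ-terms, via black lifting. -/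
def ImpLe (t u : Lam) : Prop := ImpCtxLe (t.tag .black) (u.tag .black)

/-- Interaction equivalence `≡int`. -/
def IntEq (t u : Lam) : Prop := IntLe t u ∧ IntLe u t

/-- Silent conversion `=τ`: reflexive-symmetric-transitive closure of `→τ`. -/
def SilentConv : CTerm → CTerm → Prop :=
  Relation.ReflTransGen (fun a b => StepTau a b ∨ StepTau b a)


/-! ### Checkers multi types -/

/-- Linear types: an atom `X` and arrows `M →_{p,q} L`, where a multi type `M`
is a finite multiset of linear types (syntactically represented as a list). -/
inductive LType : Type
  | atom : LType
  | arrow : List LType → Player → Player → LType → LType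

/-- Type environments: a multi type for every de Bruijn index. -/
abbrev TEnv : Type := ℕ → Multiset LType

/-- The empty type environment. -/
def TEnv.zero : TEnv := fun _ => 0

/-- Pointwise multiset union of type environments. -/
def TEnv.add (Γ Δ : TEnv) : TEnv := fun n => Γ n + Δ n

/-- The environment assigning `[L]` to `x` and `0` elsewhere. -/
def TEnv.single (x : ℕ) (L : LType) : TEnv := fun n => if n = x then {L} else 0

/-- Extend an environment with a multi type for the freshly bound de Bruijn index `0`. -/
def TEnv.cons (M : Multiset LType) (Γ : TEnv) : TEnv := fun n =>
  match n with
  | 0 => M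
  | n + 1 => Γ n

mutual
  /-- Type derivations `π ▷ Γ ⊢^k t : L` of the checkers multi type system. -/
  inductive Deriv : TEnv → ℕ → CTerm → LType → Type
    | ax (x : ℕ) (L : LType) : Deriv (TEnv.single x L) 0 (.var x) L
    | lam {Γ : TEnv} {k : ℕ} {t : CTerm} {L : LType} (p q : Player) (M : List LType) :
        Deriv (TEnv.cons (Multiset.ofList M) Γ) k t L →
        Deriv Γ k (.lam p t) (.arrow M p q L)
    | app {Γ Δ : TEnv} {k₁ k₂ : ℕ} {t u : CTerm} {M : List LType} {p q : Player} {L : LType} :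
        Deriv Γ k₁ t (.arrow M p q L) → DerivM Δ k₂ u M →
        Deriv (TEnv.add Γ Δ) (k₁ + k₂ + Player.gamma p q) (.app q t u) L
  /-- Derivations `Γ ⊢^k t : M` of a multi type (the `many` rule). -/
  inductive DerivM : TEnv → ℕ → CTerm → List LType → Type
    | nil (t : CTerm) : DerivM TEnv.zero 0 t []
    | cons {Γ Δ : TEnv} {k k' : ℕ} {t : CTerm} {L : LType} {M : List LType} :
        Deriv Γ k t L → DerivM Δ k' t M → DerivM (TEnv.add Γ Δ) (k + k') t (L :: M)
end

mutual
  /-- The (applicative) size `|π|` of a derivation: its number of `@` rules. -/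
  def Deriv.size {Γ : TEnv} {k : ℕ} {t : CTerm} {L : LType} : Deriv Γ k t L → ℕ
    | .ax _ _ => 0
    | .lam _ _ _ π => Deriv.size π
    | .app π μ => Deriv.size π + DerivM.size μ + 1
  /-- Size of a multi-type derivation. -/
  def DerivM.size {Γ : TEnv} {k : ℕ} {t : CTerm} {M : List LType} : DerivM Γ k t M → ℕ
    | .nil _ => 0
    | .cons π μ => Deriv.size π + DerivM.size μ
end

/-- Typability `Γ ⊢^k t : L`. -/
def TJ (Γ : TEnv) (k : ℕ) (t : CTerm) (L : LType) : Prop := Nonempty (Deriv Γ k t L)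

/-- Checkers relational interpretation `⟦t⟧⊛ = {(Γ, k, L) | Γ ⊢^k t : L}`. -/
def CSem (t : CTerm) : Set (TEnv × ℕ × LType) := {x | TJ x.1 x.2.1 t x.2.2}

/-- Black type preorder `⊑•type` on ordinary λ-terms. -/
def BTypeLe (t u : Lam) : Prop := CSem (t.tag .black) ⊆ CSem (u.tag .black)

/-! ### Tight typings -/

/-- All arrows occurring in a linear type are silent (`p = q`). -/
inductive AllSilent : LType → Prop
  | atom : AllSilent .atom
  | arrow {M : List LType} {p : Player} {L : LType} :
      (∀ L' ∈ M, AllSilent L') → AllSilent L → AllSilent (.arrow M p p L)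

/-- The number of nonempty multi types occurring in a linear type. -/
def LType.neCount : LType → ℕ
  | .atom => 0
  | .arrow M _ _ L =>
      min M.length 1 + (M.attach.map fun x => LType.neCount x.1).sum + LType.neCount L
decreasing_by
  · have := List.sizeOf_lt_of_mem x.2
    simp only [LType.arrow.sizeOf_spec]
    omega
  · simp only [LType.arrow.sizeOf_spec]
    omega

/-- The number of nonempty multi types occurring in a multi type (counting itself). -/
def mNeCount (m : Multiset LType) : ℕ :=
  min (Multiset.card m) 1 + (m.map LType.neCount).sum

/-- A typing `(Γ, L)` is tight when all the multi types occurring in `Γ` and `L`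
are empty except for exactly one, and all arrows occurring in `(Γ, L)` are silent. -/
def Tight (Γ : TEnv) (L : LType) : Prop :=
  AllSilent L ∧ (∀ n : ℕ, ∀ L' ∈ Γ n, AllSilent L') ∧
    ∃ S : Finset ℕ, (∀ n : ℕ, n ∉ S → Γ n = 0) ∧
      (∑ n ∈ S, mNeCount (Γ n)) + LType.neCount L = 1

/-!
A derivation is weighed by its environment, its interaction count and its size. Weights form a
commutative monoid, hence so do sets of weights under pointwise addition, and the set of weights of
the derivations of a multi type is the sum of those of its members. Lifting and substitution act on
weights through additive maps, so that a head step translates every weight set by exactly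
`(0, g, 1)`, where `g` is `1` for an interaction step and `0` for a silent one. Thus the size
bounds the length of an evaluation, and the interaction count measures it once tight typings
of head normal forms are known to have count `0`. For the latter, a head variable with an inert
type, i.e. silent with empty multi types only, hands inert types down its spine, where all
arguments are then untyped.
-/

open Set
open scoped Pointwise

section KleisliExtension

variable {α β : Type*} [AddZeroClass α] [AddMonoid β]

/-- The additive map on sets of weights induced by an additive map `φ` that may send a weight to
several ones: the Kleisli extension of `φ` for the powerset monad. -/
def kleisliExt (φ : α →+ Set β) : Set α →+ Set β where
  toFun s := ⋃ a ∈ s, φ a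
  map_zero' := (biUnion_singleton 0 _).trans (map_zero φ)
  map_add' s t := by
    simp_rw [← image2_add, biUnion_image2]
    simp_rw [map_add, image2_add, iUnion₂_add, add_iUnion₂]

theorem kleisliExt_apply (φ : α →+ Set β) (s : Set α) : kleisliExt φ s = ⋃ a ∈ s, φ a :=
  rfl

theorem kleisliExt_singleton (φ : α →+ Set β) (a : α) : kleisliExt φ {a} = φ a :=
  biUnion_singleton a _

end KleisliExtension

/-! ### Weights -/

/-- What a derivation `π ▷ Γ ⊢^k t : L` is measured by: the triple `(Γ, k, |π|)`. On the first
component, the componentwise `0` and `+` unfold to `TEnv.zero` and `TEnv.add`. -/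
abbrev Weight : Type := TEnv × ℕ × ℕ

namespace TEnv

/-- The environment with the entry of `x` dropped, as under substitution for `x`. -/
def eraseAt (x : ℕ) : TEnv →+ TEnv where
  toFun Γ n := if n < x then Γ n else Γ (n + 1)
  map_zero' := by ext1 n; simp
  map_add' Γ Δ := by ext1 n; simp only [Pi.add_apply]; split_ifs <;> rfl

/-- The environment with an empty entry inserted at `d`, as under lifting at `d`. -/
def insertAt (d : ℕ) : TEnv →+ TEnv where
  toFun Γ n := if n < d then Γ n else if n = d then 0 else Γ (n - 1)
  map_zero' := by ext1 n; simp
  map_add' Γ Δ := by ext1 n; simp only [Pi.add_apply]; split_ifs <;> simp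

theorem single_self (x : ℕ) (L : LType) : single x L x = {L} :=
  if_pos rfl

theorem single_of_ne {n x : ℕ} (h : n ≠ x) (L : LType) : single x L n = 0 :=
  if_neg h

theorem eraseAt_single_self (x : ℕ) (L : LType) : eraseAt x (single x L) = 0 := by
  ext1 n
  simp only [eraseAt, single, AddMonoidHom.coe_mk, ZeroHom.coe_mk, Pi.zero_apply]
  split_ifs <;> first | rfl | omega

theorem eraseAt_single_of_ne {n x : ℕ} (h : n ≠ x) (L : LType) :
    eraseAt x (single n L) = single (if x < n then n - 1 else n) L := by
  ext1 m
  simp only [eraseAt, single, AddMonoidHom.coe_mk, ZeroHom.coe_mk]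
  split_ifs <;> first | rfl | omega

theorem insertAt_single (d n : ℕ) (L : LType) :
    insertAt d (single n L) = single (if n < d then n else n + 1) L := by
  ext1 m
  simp only [insertAt, single, AddMonoidHom.coe_mk, ZeroHom.coe_mk]
  split_ifs <;> first | rfl | omega

theorem eraseAt_succ_cons (x : ℕ) (M : Multiset LType) (Γ : TEnv) :
    eraseAt (x + 1) (cons M Γ) = cons M (eraseAt x Γ) := by
  ext1 n
  cases n <;> simp [eraseAt, cons]

theorem insertAt_succ_cons (d : ℕ) (M : Multiset LType) (Γ : TEnv) :
    insertAt (d + 1) (cons M Γ) = cons M (insertAt d Γ) := by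
  ext1 n
  rcases n with _ | _ | n
  · simp [insertAt, cons]
  · cases d <;> simp [insertAt, cons]
  · simp [insertAt, cons]

theorem cons_add_insertAt_zero (M : Multiset LType) (Γ Δ : TEnv) :
    cons M Γ + insertAt 0 Δ = cons M (Γ + Δ) := by
  ext1 n
  cases n <;> simp [insertAt, cons]

theorem cons_eraseAt_zero (Γ : TEnv) : cons (Γ 0) (eraseAt 0 Γ) = Γ := by
  ext1 n
  cases n <;> simp [eraseAt, cons]

theorem cons_inj {M N : Multiset LType} {Γ Δ : TEnv} : cons M Γ = cons N Δ ↔ M = N ∧ Γ = Δ :=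
  ⟨fun h => ⟨congrFun h 0, funext fun n => congrFun h (n + 1)⟩, by rintro ⟨rfl, rfl⟩; rfl⟩

end TEnv

namespace Weight

/-- The action on weights of an additive map on environments. -/
def mapEnv (f : TEnv →+ TEnv) : Weight →+ Weight :=
  f.prodMap (AddMonoidHom.id (ℕ × ℕ))

/-- The weight with its environment extended by `M` for the freshly bound index `0`. -/
def cons (M : Multiset LType) (w : Weight) : Weight :=
  (TEnv.cons M w.1, w.2)

/-- The weight contributed by one application rule, `g` being its interaction cost. -/
def tick (g : ℕ) : Weight :=
  (0, g, 1)

theorem mapEnv_mk (f : TEnv →+ TEnv) (Γ : TEnv) (c : ℕ × ℕ) : mapEnv f (Γ, c) = (f Γ, c) :=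
  rfl

theorem cons_inj {M N : Multiset LType} {v w : Weight} : cons M v = cons N w ↔ M = N ∧ v = w := by
  simp only [cons, Prod.ext_iff, TEnv.cons_inj, and_assoc]

theorem exists_eq_cons (w : Weight) : ∃ M v, w = cons M v :=
  ⟨w.1 0, mapEnv (TEnv.eraseAt 0) w, Prod.ext (TEnv.cons_eraseAt_zero w.1).symm rfl⟩

theorem cons_add_tick (M : Multiset LType) (w : Weight) (g : ℕ) :
    cons M w + tick g = cons M (w + tick g) := by
  refine Prod.ext ?_ rfl
  simp [cons, tick]

theorem cons_add_mapEnv_insertAt (M : Multiset LType) (v w : Weight) :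
    cons M v + mapEnv (TEnv.insertAt 0) w = cons M (v + w) :=
  Prod.ext (TEnv.cons_add_insertAt_zero M v.1 w.1) rfl

theorem cons_image_singleton_add (M : Multiset LType) (v : Weight) (s : Set Weight) :
    cons M '' ({v} + s) = {cons M v} + mapEnv (TEnv.insertAt 0) '' s := by
  simp only [Set.singleton_add, image_image, cons_add_mapEnv_insertAt]

/-- The weights of the multi type `M`, given the weights `S L` of each linear type `L`. -/
def multi (S : LType → Set Weight) (M : Multiset LType) : Set Weight :=
  (M.map S).sum

theorem multi_zero (S : LType → Set Weight) : multi S 0 = 0 :=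
  rfl

theorem multi_singleton (S : LType → Set Weight) (L : LType) : multi S {L} = S L := by
  rw [multi, Multiset.map_singleton, Multiset.sum_singleton]

theorem multi_add (S : LType → Set Weight) (M N : Multiset LType) :
    multi S (M + N) = multi S M + multi S N := by
  rw [multi, Multiset.map_add, Multiset.sum_add, multi, multi]

theorem map_multi (F : Set Weight →+ Set Weight) (S : LType → Set Weight) (M : Multiset LType) :
    F (multi S M) = multi (fun L => F (S L)) M := by
  rw [multi, map_multiset_sum, Multiset.map_map]
  rfl

/-- How lifting at `d` acts on a weight. -/
def liftHom (d : ℕ) : Weight →+ Set Weight :=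
  singletonAddMonoidHom.comp (mapEnv (TEnv.insertAt d))

/-- How substitution for `x` of a term with weights `S` acts on a weight: the entry of `x` is
traded for the weights of the corresponding multi type. -/
def substHom (x : ℕ) (S : LType → Set Weight) : Weight →+ Set Weight where
  toFun w := {mapEnv (TEnv.eraseAt x) w} + multi S (w.1 x)
  map_zero' := by simp [multi_zero, Set.singleton_zero]
  map_add' v w := by
    simp only [map_add, multi_add, Prod.fst_add, Pi.add_apply, ← Set.singleton_add_singleton,
      add_add_add_comm]

theorem substHom_apply (x : ℕ) (S : LType → Set Weight) (w : Weight) :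
    substHom x S w = {mapEnv (TEnv.eraseAt x) w} + multi S (w.1 x) :=
  rfl

theorem liftHom_of_env_eq_zero (d : ℕ) (c : ℕ × ℕ) : liftHom d (0, c) = {(0, c)} := by
  simp [liftHom, mapEnv_mk]

theorem substHom_of_env_eq_zero (x : ℕ) (S : LType → Set Weight) (c : ℕ × ℕ) :
    substHom x S (0, c) = {(0, c)} := by
  simp [substHom_apply, mapEnv_mk, multi_zero]

theorem liftHom_succ_cons (d : ℕ) (M : Multiset LType) (w : Weight) :
    liftHom (d + 1) (cons M w) = cons M '' liftHom d w := by
  simp [liftHom, cons, mapEnv, TEnv.insertAt_succ_cons]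

theorem kleisliExt_liftHom (d : ℕ) (s : Set Weight) :
    kleisliExt (liftHom d) s = mapEnv (TEnv.insertAt d) '' s :=
  (image_eq_iUnion _ s).symm

theorem substHom_succ_cons (x : ℕ) (S : LType → Set Weight) (M : Multiset LType) (w : Weight) :
    substHom (x + 1) (fun L => kleisliExt (liftHom 0) (S L)) (cons M w) =
      cons M '' substHom x S w := by
  rw [substHom_apply, substHom_apply, cons_image_singleton_add, ← map_multi, kleisliExt_liftHom]
  congr 2
  exact Prod.ext (TEnv.eraseAt_succ_cons x M w.1) rfl

end Weight

/-! ### The weights of a term -/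

namespace CTerm

open Weight

/-- The weights of the derivations of `t : L`. -/
def weights (t : CTerm) (L : LType) : Set Weight :=
  {w | ∃ (Γ : TEnv) (k : ℕ) (π : Deriv Γ k t L), (Γ, k, π.size) = w}

theorem nonempty_deriv_iff {Γ : TEnv} {k : ℕ} {t : CTerm} {L : LType} :
    Nonempty (Deriv Γ k t L) ↔ ∃ s, (Γ, k, s) ∈ t.weights L :=
  ⟨fun ⟨π⟩ => ⟨π.size, Γ, k, π, rfl⟩, fun ⟨_, _, _, π, e⟩ => by cases e; exact ⟨π⟩⟩

theorem mem_multi_weights_iff {t : CTerm} {M : List LType} {w : Weight} :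
    w ∈ multi t.weights M ↔
      ∃ (Γ : TEnv) (k : ℕ) (μ : DerivM Γ k t M), (Γ, k, μ.size) = w := by
  induction M generalizing w with
  | nil =>
    constructor
    · rintro rfl
      exact ⟨_, _, .nil t, rfl⟩
    · rintro ⟨_, _, ⟨⟩, rfl⟩
      rfl
  | cons L M ih =>
    rw [← Multiset.cons_coe, multi, Multiset.map_cons, Multiset.sum_cons, mem_add]
    constructor
    · rintro ⟨_, ⟨Γ, k, π, rfl⟩, _, hμ, rfl⟩
      obtain ⟨Δ, l, μ, rfl⟩ := ih.1 hμ
      exact ⟨_, _, .cons π μ, rfl⟩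
    · rintro ⟨_, _, _ | ⟨π, μ⟩, rfl⟩
      exact ⟨_, ⟨_, _, π, rfl⟩, _, ih.2 ⟨_, _, μ, rfl⟩, rfl⟩

theorem weights_var (x : ℕ) (L : LType) : (var x).weights L = {(TEnv.single x L, 0)} := by
  ext w
  constructor
  · rintro ⟨_, _, ⟨⟩, rfl⟩
    rfl
  · rintro rfl
    exact ⟨_, _, .ax x L, rfl⟩

theorem mem_weights_lam {p : Player} {t : CTerm} {L : LType} {w : Weight} :
    w ∈ (lam p t).weights L ↔
      ∃ (M : List LType) (q : Player) (L' : LType),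
        L = .arrow M p q L' ∧ cons M w ∈ t.weights L' := by
  constructor
  · rintro ⟨Γ, k, _ | ⟨_, q, M, π⟩, rfl⟩
    exact ⟨M, q, _, rfl, _, k, π, rfl⟩
  · obtain ⟨Γ, k, s⟩ := w
    rintro ⟨M, q, L', rfl, _, _, π, e⟩
    obtain ⟨rfl, rfl, rfl⟩ := by simpa only [cons, Prod.mk.injEq] using e
    exact ⟨Γ, _, .lam p q M π, rfl⟩

theorem weights_app (q : Player) (t u : CTerm) (L : LType) :
    (app q t u).weights L = ⋃ (M : List LType) (p : Player),
      t.weights (.arrow M p q L) + multi u.weights M + {tick (p.gamma q)} := by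
  ext w
  simp only [mem_iUnion, add_singleton, mem_image, mem_add]
  constructor
  · rintro ⟨_, _, _ | _ | ⟨π, μ⟩, rfl⟩
    exact ⟨_, _, _, ⟨_, ⟨_, _, π, rfl⟩, _, mem_multi_weights_iff.2 ⟨_, _, μ, rfl⟩, rfl⟩,
      Prod.ext (add_zero _) rfl⟩
  · rintro ⟨M, p, _, ⟨_, ⟨Γ, k, π, rfl⟩, _, hμ, rfl⟩, rfl⟩
    obtain ⟨Δ, l, μ, rfl⟩ := mem_multi_weights_iff.1 hμ
    exact ⟨_, _, .app π μ, Prod.ext (add_zero _).symm rfl⟩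

theorem mem_weights_app {q : Player} {t u : CTerm} {L : LType} {w : Weight} :
    w ∈ (app q t u).weights L ↔ ∃ (M : List LType) (p : Player),
      ∃ a ∈ t.weights (.arrow M p q L), ∃ b ∈ multi u.weights M,
        a + b + tick (p.gamma q) = w := by
  simp only [weights_app, mem_iUnion, add_singleton, mem_image, mem_add,
    exists_exists_and_exists_and_eq_and]

theorem weights_lam_eq_biUnion {t t' : CTerm} {φ ψ : Weight → Set Weight}
    (hcons : ∀ M w, ψ (cons M w) = cons M '' φ w)
    (ht : ∀ L, t'.weights L = ⋃ w ∈ t.weights L, ψ w) (p : Player) (L : LType) :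
    (lam p t').weights L = ⋃ w ∈ (lam p t).weights L, φ w := by
  ext w
  simp only [mem_iUnion₂, mem_weights_lam, ht]
  constructor
  · rintro ⟨M, q, L', rfl, v, hv, hw⟩
    obtain ⟨N, v, rfl⟩ := exists_eq_cons v
    obtain ⟨w', hw', e⟩ := hcons N v ▸ hw
    obtain ⟨rfl, rfl⟩ := cons_inj.1 e
    exact ⟨v, ⟨M, q, L', rfl, hv⟩, hw'⟩
  · rintro ⟨v, ⟨M, q, L', rfl, hv⟩, hw⟩
    exact ⟨M, q, L', rfl, cons M v, hv, hcons M v ▸ mem_image_of_mem _ hw⟩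

theorem weights_app_eq_kleisliExt {t t' u u' : CTerm} {φ : Weight →+ Set Weight}
    (hφ : ∀ c, φ (0, c) = {(0, c)}) (ht : ∀ L, t'.weights L = kleisliExt φ (t.weights L))
    (hu : ∀ L, u'.weights L = kleisliExt φ (u.weights L)) (q : Player) (L : LType) :
    (app q t' u').weights L = kleisliExt φ ((app q t u).weights L) := by
  have hmulti (M : Multiset LType) : multi u'.weights M = kleisliExt φ (multi u.weights M) := by
    rw [map_multi, ← funext hu]
  have htick (g : ℕ) : {tick g} = kleisliExt φ {tick g} := by
    rw [kleisliExt_singleton, tick, hφ]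
  rw [weights_app, weights_app, kleisliExt_apply]
  simp only [biUnion_iUnion]
  simp only [← kleisliExt_apply, map_add, ht, hmulti, ← htick]

theorem weights_liftAt (t : CTerm) (d : ℕ) (L : LType) :
    (t.liftAt d).weights L = kleisliExt (liftHom d) (t.weights L) := by
  induction t generalizing d L with
  | var n =>
    rw [liftAt, weights_var, weights_var, kleisliExt_liftHom, image_singleton, mapEnv_mk,
      TEnv.insertAt_single]
  | lam p t ih => exact weights_lam_eq_biUnion (liftHom_succ_cons d) (ih (d + 1)) p L
  | app q t u iht ihu =>
    exact weights_app_eq_kleisliExt (liftHom_of_env_eq_zero d) (iht d) (ihu d) q L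

theorem weights_subst_var (n x : ℕ) (u : CTerm) (L : LType) :
    ((var n).subst x u).weights L = substHom x u.weights (TEnv.single n L, 0) := by
  rw [substHom_apply, mapEnv_mk, subst]
  rcases eq_or_ne n x with rfl | h
  · dsimp only
    rw [if_pos rfl, TEnv.eraseAt_single_self, TEnv.single_self, multi_singleton]
    exact (zero_add _).symm
  · rw [if_neg h, ← apply_ite var, weights_var, TEnv.eraseAt_single_of_ne h]
    simp [TEnv.single_of_ne h.symm, multi_zero]

theorem weights_subst (t : CTerm) (x : ℕ) (u : CTerm) (L : LType) :
    (t.subst x u).weights L = kleisliExt (substHom x u.weights) (t.weights L) := by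
  induction t generalizing x u L with
  | var n => rw [weights_subst_var, weights_var, kleisliExt_singleton]
  | lam p t ih =>
    have hlift : (u.liftAt 0).weights = fun L => kleisliExt (liftHom 0) (u.weights L) :=
      funext (weights_liftAt u 0)
    refine weights_lam_eq_biUnion (fun N w => ?_) (ih (x + 1) (u.liftAt 0)) p L
    rw [hlift, substHom_succ_cons]
  | app q t s iht ihs =>
    exact weights_app_eq_kleisliExt (substHom_of_env_eq_zero x _) (iht x u) (ihs x u) q L

/-! ### Quantitative subject reduction and expansion -/

theorem weights_beta (p q : Player) (t u : CTerm) (L : LType) :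
    (app q (lam p t) u).weights L = (t.subst 0 u).weights L + {tick (p.gamma q)} := by
  ext w
  simp only [mem_weights_app, mem_weights_lam, weights_subst, kleisliExt_apply, substHom_apply,
    Set.singleton_add, add_singleton, mem_image, mem_iUnion₂]
  constructor
  · rintro ⟨_, _, a, ⟨M, _, _, ⟨⟩, ha⟩, b, hb, rfl⟩
    exact ⟨a + b, ⟨_, ha, b, hb, rfl⟩, rfl⟩
  · rintro ⟨_, ⟨v, hv, b, hb, rfl⟩, rfl⟩
    obtain ⟨M, a, rfl⟩ := exists_eq_cons v
    obtain ⟨M, rfl⟩ := Quot.exists_rep M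
    exact ⟨M, p, a, ⟨M, q, L, rfl, hv⟩, b, hb, rfl⟩

end CTerm

open CTerm Weight

theorem CSpine.weights_eq {R : CTerm → CTerm → Prop} {g : ℕ}
    (hR : ∀ {t u}, R t u → ∀ L, t.weights L = u.weights L + {tick g}) {t u : CTerm}
    (h : CSpine R t u) (L : LType) : t.weights L = u.weights L + {tick g} := by
  induction h generalizing L with
  | root h => exact hR h L
  | appL q s _ ih =>
    simp only [weights_app, ih, iUnion_add]
    simp only [add_right_comm _ ({tick g} : Set Weight)]

theorem CHead.weights_eq {R : CTerm → CTerm → Prop} {g : ℕ}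
    (hR : ∀ {t u}, R t u → ∀ L, t.weights L = u.weights L + {tick g}) {t u : CTerm}
    (h : CHead R t u) (L : LType) : t.weights L = u.weights L + {tick g} := by
  induction h generalizing L with
  | spine h => exact h.weights_eq hR L
  | lam p _ ih =>
    simp only [add_singleton, image_eq_iUnion] at ih ⊢
    exact weights_lam_eq_biUnion (fun _ _ => by rw [image_singleton, cons_add_tick]) ih p L

theorem HStepTau.weights_eq {t u : CTerm} (h : HStepTau t u) (L : LType) :
    t.weights L = u.weights L + {tick 0} :=
  CHead.weights_eq (by rintro _ _ ⟨p, t, u⟩ L; simp [weights_beta, Player.gamma]) h L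

theorem HStepInt.weights_eq {t u : CTerm} (h : HStepInt t u) (L : LType) :
    t.weights L = u.weights L + {tick 1} :=
  CHead.weights_eq
    (by rintro _ _ ⟨p, t, u⟩ L; cases p <;> simp [weights_beta, Player.gamma, Player.op]) h L

theorem HRed.weights_eq {t h : CTerm} {n k : ℕ} (hr : HRed t n k h) (L : LType) :
    t.weights L = h.weights L + {(0, k, n)} := by
  induction hr with
  | refl t => exact (add_zero _).symm
  | silent hs _ ih =>
    rw [hs.weights_eq, ih, add_assoc, Set.singleton_add_singleton]
    rfl
  | inter hs _ ih =>
    rw [hs.weights_eq, ih, add_assoc, Set.singleton_add_singleton]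
    rfl

theorem exists_hRed_hnf_of_mem_weights {t : CTerm} {L : LType} {w : Weight}
    (hw : w ∈ t.weights L) : ∃ (h : CTerm) (n k : ℕ), h.HNF ∧ HRed t n k h := by
  induction hs : w.2.2 using Nat.strong_induction_on generalizing t w with
  | _ s ih =>
    by_cases hn : t.HNF
    · exact ⟨t, 0, 0, hn, .refl t⟩
    · simp only [HNF, not_forall, not_not] at hn
      obtain ⟨u, hu⟩ := hn
      obtain ⟨g, hg⟩ : ∃ g, t.weights L = u.weights L + {tick g} :=
        hu.elim (fun hτ => ⟨0, hτ.weights_eq L⟩) (fun hi => ⟨1, hi.weights_eq L⟩)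
      rw [hg, add_singleton] at hw
      obtain ⟨v, hv, rfl⟩ := hw
      obtain ⟨h, n, k, hh, hr⟩ := ih v.2.2 (hs ▸ Nat.lt_succ_self _) hv rfl
      exact hu.elim (fun hτ => ⟨h, _, _, hh, .silent hτ hr⟩)
        (fun hi => ⟨h, _, _, hh, .inter hi hr⟩)

/-! ### Head normal forms -/

/-- Neutral terms `x @_{q1} t1 … @_{qk} tk`: the head normal forms that are not abstractions. -/
inductive Neutral : CTerm → Prop
  | var (x : ℕ) : Neutral (.var x)
  | app (q : Player) {t : CTerm} (u : CTerm) : Neutral t → Neutral (.app q t u)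

namespace CTerm.HNF

theorem of_lam {p : Player} {t : CTerm} (h : (lam p t).HNF) : t.HNF :=
  fun _ hu => h _ (hu.imp (.lam p) (.lam p))

theorem not_beta (p q : Player) (t u : CTerm) : ¬ (app q (lam p t) u).HNF := fun h => by
  cases p <;> cases q
  · exact h _ (.inl (.spine (.root (.beta .white t u))))
  · exact h _ (.inr (.spine (.root (.beta .white t u))))
  · exact h _ (.inr (.spine (.root (.beta .black t u))))
  · exact h _ (.inl (.spine (.root (.beta .black t u))))

theorem of_app {q : Player} {t u : CTerm} (h : (app q t u).HNF) : t.HNF := by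
  have spine_of_head {R : CTerm → CTerm → Prop} {v : CTerm} : CHead R t v → CSpine R t v
    | .spine hv => hv
    | .lam _ _ => absurd h (not_beta _ _ _ _)
  exact fun v hv => h _ (hv.imp (fun hv => .spine (.appL q u (spine_of_head hv)))
    (fun hv => .spine (.appL q u (spine_of_head hv))))

theorem neutral_of_app {q : Player} {t u : CTerm} (h : (app q t u).HNF) :
    Neutral (app q t u) := by
  induction t generalizing q u with
  | var x => exact .app q u (.var x)
  | lam p t _ => exact absurd h (not_beta p q t u)
  | app p t s iht _ => exact .app q u (iht h.of_app)

@[elab_as_elim]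
theorem induction {P : ∀ t : CTerm, t.HNF → Prop} (neutral : ∀ t h, Neutral t → P t h)
    (lam : ∀ p t (h : (lam p t).HNF), P t h.of_lam → P (.lam p t) h) {t : CTerm} (h : t.HNF) :
    P t h := by
  induction t with
  | var x => exact neutral _ h (.var x)
  | lam p t ih => exact lam p t h (ih h.of_lam)
  | app q t u _ _ => exact neutral _ h h.neutral_of_app

end CTerm.HNF

/-! ### Tight typings of head normal forms -/

theorem allSilent_arrow_iff {M : List LType} {p q : Player} {L : LType} :
    AllSilent (.arrow M p q L) ↔ p = q ∧ (∀ L' ∈ M, AllSilent L') ∧ AllSilent L := by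
  constructor
  · rintro (_ | ⟨hM, hL⟩)
    exact ⟨rfl, hM, hL⟩
  · rintro ⟨rfl, hM, hL⟩
    exact .arrow hM hL

theorem LType.neCount_arrow (M : List LType) (p q : Player) (L : LType) :
    (arrow M p q L).neCount = mNeCount M + L.neCount := by
  simp [LType.neCount, mNeCount]

theorem mNeCount_zero : mNeCount 0 = 0 := rfl

theorem mNeCount_singleton (L : LType) : mNeCount {L} = 1 + L.neCount := by
  simp [mNeCount]

theorem one_add_neCount_le_mNeCount {L : LType} {M : Multiset LType} (h : L ∈ M) :
    1 + L.neCount ≤ mNeCount M := by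
  have hcard : 0 < M.card := Multiset.card_pos_iff_exists_mem.2 ⟨L, h⟩
  have hsum : L.neCount ≤ (M.map LType.neCount).sum :=
    Multiset.single_le_sum (fun _ _ => Nat.zero_le _) _ (Multiset.mem_map_of_mem _ h)
  rw [mNeCount]
  omega

theorem mNeCount_eq_zero_iff {M : Multiset LType} : mNeCount M = 0 ↔ M = 0 := by
  refine ⟨fun h => Multiset.eq_zero_of_forall_notMem fun L hL => ?_, fun h => h ▸ mNeCount_zero⟩
  have := one_add_neCount_le_mNeCount hL
  omega

/-- The types `[] →_{p1,p1} … [] →_{pn,pn} X`: all arrows silent, all multi types empty. -/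
def LType.Inert (L : LType) : Prop :=
  AllSilent L ∧ L.neCount = 0

theorem LType.inert_atom : Inert .atom :=
  ⟨.atom, by rw [neCount]⟩

theorem LType.inert_arrow_iff {M : List LType} {p q : Player} {L : LType} :
    Inert (.arrow M p q L) ↔ M = [] ∧ p = q ∧ Inert L := by
  simp only [Inert, allSilent_arrow_iff, neCount_arrow, Nat.add_eq_zero_iff, mNeCount_eq_zero_iff,
    Multiset.coe_eq_zero]
  constructor
  · rintro ⟨⟨rfl, -, hL⟩, rfl, h0⟩
    exact ⟨rfl, rfl, hL, h0⟩
  · rintro ⟨rfl, rfl, hL, h0⟩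
    exact ⟨⟨rfl, by simp, hL⟩, rfl, h0⟩

theorem Tight.inert {Γ : TEnv} {L L' : LType} {x : ℕ} (h : Tight Γ L) (hx : L' ∈ Γ x) :
    L'.Inert := by
  obtain ⟨-, hΓ, S, hS, hsum⟩ := h
  have hxS : x ∈ S := by
    by_contra hxS
    simp [hS x hxS] at hx
  have hle := Finset.single_le_sum (f := fun n => mNeCount (Γ n)) (fun _ _ => Nat.zero_le _) hxS
  have := one_add_neCount_le_mNeCount hx
  exact ⟨hΓ x L' hx, by omega⟩

theorem tight_single {L L' : LType} (hL : L.Inert) (hL' : L'.Inert) (x : ℕ) :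
    Tight (TEnv.single x L') L := by
  refine ⟨hL.1, fun n A hA => ?_, {x},
    fun n hn => TEnv.single_of_ne (Finset.notMem_singleton.1 hn) L', ?_⟩
  · rw [TEnv.single] at hA
    split_ifs at hA
    · exact Multiset.mem_singleton.1 hA ▸ hL'.1
    · exact absurd hA (Multiset.notMem_zero A)
  · rw [Finset.sum_singleton, TEnv.single_self, mNeCount_singleton, hL.2, hL'.2]

theorem sum_mNeCount_cons (M : Multiset LType) (Γ : TEnv) (S : Finset ℕ) :
    ∑ n ∈ insert 0 (S.map (addRightEmbedding 1)), mNeCount (TEnv.cons M Γ n) =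
      mNeCount M + ∑ n ∈ S, mNeCount (Γ n) := by
  rw [Finset.sum_insert (by simp), Finset.sum_map]
  rfl

theorem tight_arrow_iff {Γ : TEnv} {M : List LType} {p : Player} {L : LType} :
    Tight Γ (.arrow M p p L) ↔ Tight (TEnv.cons M Γ) L := by
  constructor
  · rintro ⟨hL, hΓ, S, hS, hsum⟩
    obtain ⟨-, hM, hL⟩ := allSilent_arrow_iff.1 hL
    refine ⟨hL, Nat.rec hM fun n _ => hΓ n, insert 0 (S.map (addRightEmbedding 1)), ?_, ?_⟩
    · rintro (_ | n) hn
      · simp at hn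
      · exact hS n (by simpa using hn)
    · rw [LType.neCount_arrow] at hsum
      rw [sum_mNeCount_cons]
      omega
  · rintro ⟨hL, hΓ, S, hS, hsum⟩
    have hpred (n : ℕ) (hn : n ∉ S.image Nat.pred) : Γ n = 0 :=
      hS (n + 1) fun h => hn (Finset.mem_image_of_mem Nat.pred h)
    refine ⟨allSilent_arrow_iff.2 ⟨rfl, hΓ 0, hL⟩, fun n => hΓ (n + 1), S.image Nat.pred, hpred, ?_⟩
    have hsub : S ⊆ insert 0 ((S.image Nat.pred).map (addRightEmbedding 1)) := by
      rintro (_ | n) hn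
      · simp
      · simpa using ⟨n + 1, hn, rfl⟩
    rw [Finset.sum_subset hsub fun n _ hn => by rw [hS n hn, mNeCount_zero],
      sum_mNeCount_cons] at hsum
    rw [LType.neCount_arrow]
    omega

theorem Neutral.exists_mem_env_inert_imp {t : CTerm} (ht : Neutral t) {L : LType} {w : Weight}
    (hw : w ∈ t.weights L) : ∃ x, ∃ L' ∈ w.1 x, L'.Inert → L.Inert ∧ w.2.1 = 0 := by
  induction ht generalizing L w with
  | var x =>
    rw [weights_var] at hw
    obtain rfl := hw
    exact ⟨x, L, by simp [TEnv.single_self], fun h => ⟨h, rfl⟩⟩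
  | app q u _ ih =>
    obtain ⟨M, p, a, ha, b, hb, rfl⟩ := mem_weights_app.1 hw
    obtain ⟨x, L', hx, hL'⟩ := ih ha
    refine ⟨x, L', by simp [hx], fun hI => ?_⟩
    obtain ⟨harrow, hcount⟩ := hL' hI
    obtain ⟨rfl, rfl, hL⟩ := LType.inert_arrow_iff.1 harrow
    obtain rfl : b = 0 := hb
    exact ⟨hL, by simp [hcount, tick, Player.gamma]⟩

theorem Neutral.exists_single_mem_weights {t : CTerm} (ht : Neutral t) {L : LType}
    (hL : L.Inert) :
    ∃ (x : ℕ) (L' : LType) (s : ℕ), L'.Inert ∧ (TEnv.single x L', 0, s) ∈ t.weights L := by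
  induction ht generalizing L with
  | var x => exact ⟨x, L, 0, hL, (weights_var x L).symm ▸ rfl⟩
  | app q u _ ih =>
    obtain ⟨x, L', s, hL', h⟩ := ih (LType.inert_arrow_iff.2 ⟨rfl, rfl, hL⟩)
    exact ⟨x, L', s + 1, hL', mem_weights_app.2 ⟨[], q, _, h, 0, rfl, by simp [tick, Player.gamma]⟩⟩

theorem CTerm.HNF.count_eq_zero_of_tight {t : CTerm} (ht : t.HNF) :
    ∀ {L : LType} {w : Weight}, w ∈ t.weights L → Tight w.1 L → w.2.1 = 0 := by
  induction ht using CTerm.HNF.induction with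
  | neutral t _ ht =>
    intro L w hw hT
    obtain ⟨x, L', hx, h⟩ := ht.exists_mem_env_inert_imp hw
    exact (h (hT.inert hx)).2
  | lam p t _ ih =>
    intro L w hw hT
    obtain ⟨M, q, L, rfl, ht⟩ := mem_weights_lam.1 hw
    obtain ⟨rfl, -⟩ := allSilent_arrow_iff.1 hT.1
    exact ih (w := cons M w) ht (tight_arrow_iff.1 hT)

theorem CTerm.HNF.exists_tight {t : CTerm} (ht : t.HNF) :
    ∃ (Γ : TEnv) (L : LType) (s : ℕ), (Γ, 0, s) ∈ t.weights L ∧ Tight Γ L := by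
  induction ht using CTerm.HNF.induction with
  | neutral t _ ht =>
    obtain ⟨x, L', s, hL', h⟩ := ht.exists_single_mem_weights LType.inert_atom
    exact ⟨_, _, s, h, tight_single LType.inert_atom hL' x⟩
  | lam p t _ ih =>
    obtain ⟨Γ, L, s, h, hT⟩ := ih
    obtain ⟨M, hM⟩ := Quot.exists_rep (Γ 0)
    have hΓ : TEnv.cons M (TEnv.eraseAt 0 Γ) = Γ := by
      rw [← TEnv.cons_eraseAt_zero Γ, ← hM]
      rfl
    rw [← hΓ] at h hT
    exact ⟨_, _, s, mem_weights_lam.2 ⟨M, p, L, rfl, h⟩, tight_arrow_iff.2 hT⟩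

/-- Tight characterization: tight derivations measure exactly the number of
interaction steps of checkers head evaluations. -/
theorem tight_characterization (t : CTerm) :
    (∀ (Γ : TEnv) (k : ℕ) (L : LType), Nonempty (Deriv Γ k t L) → Tight Γ L →
      ∃ (h : CTerm) (n : ℕ), h.HNF ∧ HRed t n k h) ∧
    (∀ (h : CTerm) (n k : ℕ), HRed t n k h → h.HNF →
      ∃ (Γ : TEnv) (L : LType), Nonempty (Deriv Γ k t L) ∧ Tight Γ L) := by
  constructor
  · intro Γ k L hder hT
    obtain ⟨s, hw⟩ := nonempty_deriv_iff.1 hder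
    obtain ⟨h, n, k', hh, hr⟩ := exists_hRed_hnf_of_mem_weights hw
    rw [hr.weights_eq, add_singleton] at hw
    obtain ⟨⟨Γ', k₀, s'⟩, hv, e⟩ := hw
    obtain ⟨rfl, rfl, -⟩ : Γ' = Γ ∧ k₀ + k' = k ∧ s' + n = s := by simpa using e
    obtain rfl : k₀ = 0 := hh.count_eq_zero_of_tight hv hT
    exact ⟨h, n, hh, (zero_add k').symm ▸ hr⟩
  · intro h n k hr hh
    obtain ⟨Γ, L, s, hw, hT⟩ := hh.exists_tight
    refine ⟨Γ, L, nonempty_deriv_iff.2 ⟨s + n, ?_⟩, hT⟩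
    rw [hr.weights_eq, add_singleton]
    exact ⟨_, hw, by simp⟩
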